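/- arXiv:2303.11468 — 2 statements merged into one kernel-verified Lean document; each statement's English description precedes it below -/
import Mathlib

section
/- Let V ⊆ L be an infinite-dimensional locally finite subspace with norm sequence (r_i)_{i≥1}, let (v_i)_{i≥1} be an ordered basis of V, and for m ≥ 0 set V_m := span_{F_q}{v_1,…,v_m}. Then for all integers m ≥ 1 and k ≥ 1: if k < m then ∑_{v∈V_m} v^{q^k−1} = 0 (with the convention 0^{q^k−1} = 0), while if k ≥ m then ‖∑_{v∈V_m} v^{q^k−1}‖ ≤ r_m^{q^k − q^m} · ∏_{i=1}^{m} r_i^{q^{i} − q^{i−1}}. -/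
/-!
Write `V_m` for the span of the first `m` basis vectors and `S_m(j) = ∑_{x ∈ V_m} x ^ j`, summed over
coordinate vectors in `Fin m → Fq`.

*Vanishing.* `S_m(j) = 0` whenever `j + 1 < q ^ m`. By Lagrange interpolation of `X ^ j` at the
`q ^ m` points of `V_m`, the coefficient of `X ^ (q ^ m - 1)`, which is `0`, equals
`∑_x x ^ j / ∏_{y ≠ x} (x - y)`. Since `V_m` is a group, the denominator is the product of all nonzero
elements of `V_m`, independently of `x` (`powSum_eq_zero`).

*Bound.* Expanding `S_{m+1}(j) = ∑_a ∑_{x ∈ V_m} (x + a v_m) ^ j` binomially and using that binomial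
coefficients and scalars have norm at most `1`, a bound for the `S_m(i)` in terms of a radius
`ρ ≥ ‖v_0‖, …, ‖v_{m-1}‖`, applied with `ρ = ‖v_m‖`, gives the bound for `S_{m+1}(j)` with radius `‖v_m‖`.
Passing to a larger radius `ρ` is allowed if the exponent `j + 1 - q ^ (m + 1)` of the radius is
nonnegative, and otherwise `S_{m+1}(j)` vanishes (`norm_powSum_le`).
-/

/-- `V` is a locally finite `Fq`-subspace of `L`. -/
def IsLocallyFiniteSubspace (Fq : Type*) [Field Fq] {L : Type*} [NormedField L]
    [Algebra Fq L] (V : Submodule Fq L) : Prop :=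
  ∀ r : ℝ, 0 < r → {x : L | x ∈ V ∧ ‖x‖ ≤ r}.Finite

/-- `v` is an ordered basis of the locally finite subspace `V ⊆ L` (indices shifted so that
`v 0` is the paper's `v_1`); the norm sequence of `V` is then `r_{i+1} = ‖v i‖`. -/
def IsOrderedBasis (Fq : Type*) [Field Fq] {L : Type*} [NormedField L]
    [Algebra Fq L] (V : Submodule Fq L) (v : ℕ → L) : Prop :=
  ∀ m : ℕ,
    v m ∈ V ∧ v m ∉ Submodule.span Fq (Set.range fun i : Fin m => v i) ∧
      ∀ x ∈ V, x ∉ Submodule.span Fq (Set.range fun i : Fin m => v i) → ‖v m‖ ≤ ‖x‖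

/-- The sum of the `j`-th powers of the linear combinations of `v 0, …, v (m - 1)`, indexed by
their coordinate vectors. -/
noncomputable def powSum (Fq : Type*) [Field Fq] [Fintype Fq] {L : Type*} [Field L] [Algebra Fq L]
    (v : ℕ → L) (m j : ℕ) : L :=
  ∑ a : Fin m → Fq, (Fintype.linearCombination Fq (fun i : Fin m => v i) a) ^ j

/-- The power sum vanishes since it is, up to a nonzero factor, the coefficient of
`X ^ (q ^ m - 1)` in the interpolation polynomial of `X ^ j`. -/
theorem powSum_eq_zero {Fq L : Type*} [Field Fq] [Fintype Fq] [Field L] [Algebra Fq L]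
    (v : ℕ → L) (m j : ℕ) (hli : LinearIndependent Fq (fun i : Fin m => v i))
    (hj : j + 1 < Fintype.card Fq ^ m) : powSum Fq v m j = 0 := by
  classical
  have hinj := hli.fintypeLinearCombination_injective
  unfold powSum
  set f := Fintype.linearCombination Fq (fun i : Fin m => v i) with hf
  have hcard : (Finset.univ : Finset (Fin m → Fq)).card = Fintype.card Fq ^ m := by
    simp
  have hdeg : (Polynomial.X ^ j : Polynomial L).degree
      < ((Finset.univ : Finset (Fin m → Fq)).card : WithBot ℕ) := by
    rw [Polynomial.degree_X_pow, hcard]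
    exact_mod_cast (by omega : j < Fintype.card Fq ^ m)
  have key := Lagrange.coeff_eq_sum (s := Finset.univ) (v := f) hinj.injOn hdeg
  -- Translation by `a` carries the nonzero vectors onto those different from `a`.
  have hprod : ∀ a : Fin m → Fq, ∏ b ∈ Finset.univ.erase a, (f a - f b)
      = ∏ c ∈ Finset.univ.erase (0 : Fin m → Fq), f c := by
    intro a
    refine Finset.prod_bij' (fun b _ => a - b) (fun c _ => a - c) ?_ ?_ ?_ ?_ ?_
    · intro b hb
      simp only [Finset.mem_erase, Finset.mem_univ, and_true] at hb ⊢
      exact sub_ne_zero.mpr (Ne.symm hb)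
    · intro c hc
      simpa using hc
    · intro b _
      simp
    · intro c _
      simp
    · intro b _
      simp
  have hne : (∏ c ∈ Finset.univ.erase (0 : Fin m → Fq), f c) ≠ 0 := by
    rw [Finset.prod_ne_zero_iff]
    intro c hc h0
    exact (Finset.mem_erase.mp hc).1 (hinj (by rw [h0, map_zero]))
  simp_rw [hprod, Polynomial.eval_pow, Polynomial.eval_X, ← Finset.sum_div] at key
  rw [Polynomial.coeff_X_pow, if_neg (by omega)] at key
  exact (div_eq_zero_iff.mp key.symm).resolve_right hne

theorem powSum_succ {Fq L : Type*} [Field Fq] [Fintype Fq] [Field L] [Algebra Fq L]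
    (v : ℕ → L) (m j : ℕ) :
    powSum Fq v (m + 1) j = ∑ a : Fq, ∑ i ∈ Finset.range (j + 1),
      powSum Fq v m i * (algebraMap Fq L a * v m) ^ (j - i) * (j.choose i : L) := by
  unfold powSum
  rw [← (Fin.snocEquiv (fun _ : Fin (m + 1) => Fq)).sum_comp, Fintype.sum_prod_type]
  refine Finset.sum_congr rfl fun a _ => ?_
  simp_rw [Finset.sum_mul]
  rw [Finset.sum_comm]
  refine Finset.sum_congr rfl fun b _ => ?_
  rw [← add_pow]
  simp [Fintype.linearCombination_apply, Fin.sum_univ_castSucc, Fin.snocEquiv, Algebra.smul_def]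

theorem norm_powSum_le {Fq L : Type*} [Field Fq] [Fintype Fq] [NormedField L]
    [IsUltrametricDist L] [Algebra Fq L] (hle : ∀ c : Fq, ‖algebraMap Fq L c‖ ≤ 1)
    (v : ℕ → L) (hli : ∀ m, LinearIndependent Fq (fun i : Fin m => v i))
    (hpos : ∀ i, 0 < ‖v i‖) (hmono : Monotone fun i => ‖v i‖) (m : ℕ) :
    ∀ (j : ℕ) (ρ : ℝ), 0 < ρ → (∀ i < m, ‖v i‖ ≤ ρ) →
      ‖powSum Fq v m j‖ ≤ ρ ^ ((j : ℤ) + 1 - (Fintype.card Fq : ℤ) ^ m) *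
        ∏ i ∈ Finset.range m,
          ‖v i‖ ^ ((Fintype.card Fq : ℤ) ^ (i + 1) - (Fintype.card Fq : ℤ) ^ i) := by
  induction m with
  | zero =>
    intro j ρ hρ _
    rcases Nat.eq_zero_or_pos j with rfl | hj
    · simp [powSum]
    · have h0 : ∀ a : Fin 0 → Fq,
          Fintype.linearCombination Fq (fun i : Fin 0 => v i) a = 0 := fun a => by
        simp [Fintype.linearCombination_apply]
      simp only [powSum, h0]
      simp [hj.ne', pow_nonneg hρ.le]
  | succ m ih =>
    intro j ρ hρ hvρ
    set P : ℕ → ℝ := fun n => ∏ i ∈ Finset.range n,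
      ‖v i‖ ^ ((Fintype.card Fq : ℤ) ^ (i + 1) - (Fintype.card Fq : ℤ) ^ i) with hP
    have hPnn : ∀ n, 0 ≤ P n := fun n => Finset.prod_nonneg fun i _ => by positivity
    by_cases hj : j + 1 < Fintype.card Fq ^ (m + 1)
    · rw [powSum_eq_zero v (m + 1) j (hli _) hj, norm_zero]
      exact mul_nonneg (by positivity) (hPnn _)
    push Not at hj
    have hr := hpos m
    have hstep : ‖powSum Fq v (m + 1) j‖
        ≤ ‖v m‖ ^ ((j : ℤ) + 1 - (Fintype.card Fq : ℤ) ^ m) * P m := by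
      have hnn : 0 ≤ ‖v m‖ ^ ((j : ℤ) + 1 - (Fintype.card Fq : ℤ) ^ m) * P m :=
        mul_nonneg (by positivity) (hPnn _)
      rw [powSum_succ]
      refine IsUltrametricDist.norm_sum_le_of_forall_le_of_nonneg hnn fun a _ => ?_
      refine IsUltrametricDist.norm_sum_le_of_forall_le_of_nonneg hnn fun i hi => ?_
      have hij : i ≤ j := Nat.lt_succ_iff.mp (Finset.mem_range.mp hi)
      have h1 := ih i ‖v m‖ hr fun l hl => hmono hl.le
      have h2 : ‖((j.choose i : ℕ) : L)‖ ≤ 1 := by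
        simpa using hle ((j.choose i : ℕ) : Fq)
      have h3 : ‖(algebraMap Fq L a * v m) ^ (j - i)‖ ≤ ‖v m‖ ^ (j - i) := by
        rw [norm_pow, norm_mul]
        exact pow_le_pow_left₀ (by positivity)
          (mul_le_of_le_one_left (norm_nonneg _) (hle a)) _
      have hexp : ‖v m‖ ^ ((j : ℤ) + 1 - (Fintype.card Fq : ℤ) ^ m)
          = ‖v m‖ ^ ((i : ℤ) + 1 - (Fintype.card Fq : ℤ) ^ m) * ‖v m‖ ^ (j - i) := by
        rw [← zpow_natCast, ← zpow_add₀ hr.ne', Nat.cast_sub hij]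
        congr 1
        ring
      rw [norm_mul, norm_mul]
      calc ‖powSum Fq v m i‖ * ‖(algebraMap Fq L a * v m) ^ (j - i)‖ * ‖((j.choose i : ℕ) : L)‖
          ≤ (‖v m‖ ^ ((i : ℤ) + 1 - (Fintype.card Fq : ℤ) ^ m) * P m) * ‖v m‖ ^ (j - i) * 1 := by
            gcongr
        _ = _ := by rw [hexp]; ring
    have hsplit : ‖v m‖ ^ ((j : ℤ) + 1 - (Fintype.card Fq : ℤ) ^ m) * P m
        = ‖v m‖ ^ ((j : ℤ) + 1 - (Fintype.card Fq : ℤ) ^ (m + 1)) * P (m + 1) := by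
      simp only [hP]
      rw [Finset.prod_range_succ, mul_comm (∏ i ∈ Finset.range m, _), ← mul_assoc,
        ← zpow_add₀ hr.ne']
      congr 2
      ring
    refine hstep.trans (hsplit.le.trans ?_)
    refine mul_le_mul_of_nonneg_right ?_ (hPnn _)
    refine zpow_le_zpow_left₀ ?_ hr.le (hvρ m (Nat.lt_succ_self m))
    have : (Fintype.card Fq : ℤ) ^ (m + 1) ≤ (j : ℤ) + 1 := by exact_mod_cast hj
    linarith

theorem IsOrderedBasis.linearIndependent {Fq L : Type*} [Field Fq] [NormedField L] [Algebra Fq L]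
    {V : Submodule Fq L} {v : ℕ → L} (hv : IsOrderedBasis Fq V v) (m : ℕ) :
    LinearIndependent Fq (fun i : Fin m => v i) := by
  induction m with
  | zero => exact linearIndependent_empty_type
  | succ m ih =>
    rw [linearIndependent_finSucc']
    exact ⟨ih, (hv m).2.1⟩

theorem IsOrderedBasis.monotone_norm {Fq L : Type*} [Field Fq] [NormedField L] [Algebra Fq L]
    {V : Submodule Fq L} {v : ℕ → L} (hv : IsOrderedBasis Fq V v) :
    Monotone fun i => ‖v i‖ := by
  refine monotone_nat_of_le_succ fun n => (hv n).2.2 _ (hv (n + 1)).1 fun hmem => ?_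
  refine (hv (n + 1)).2.1 (Submodule.span_mono ?_ hmem)
  rintro _ ⟨i, rfl⟩
  exact ⟨i.castSucc, rfl⟩

/-- With `V_m := span_{Fq}{v_1, …, v_m}` for an ordered basis `(v_i)` of an
infinite-dimensional locally finite subspace `V ⊆ L`, for all `m, k ≥ 1`: if `k < m` then
`∑_{x ∈ V_m} x^{q^k − 1} = 0`, while if `k ≥ m` then
`‖∑_{x ∈ V_m} x^{q^k − 1}‖ ≤ r_m^{q^k − q^m} ∏_{i=1}^m r_i^{q^i − q^{i−1}}`
(the norm sequence being `r_{i+1} = ‖v i‖`, indices 0-based). -/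
theorem stmt7 {Fq L : Type*} [Field Fq] [Fintype Fq] [NormedField L] [IsUltrametricDist L]
    [CompleteSpace L] [Algebra Fq L]
    (htriv : ∀ c : Fq, c ≠ 0 → ‖algebraMap Fq L c‖ = 1)
    (V : Submodule Fq L) (hV : IsLocallyFiniteSubspace Fq V) (hinf : ¬ Module.Finite Fq V)
    (v : ℕ → L) (hv : IsOrderedBasis Fq V v) (m k : ℕ) (hm : 1 ≤ m) (hk : 1 ≤ k) :
    (k < m →
      (∑ᶠ x ∈ ((Submodule.span Fq (Set.range fun i : Fin m => v i) : Set L)),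
        x ^ (Fintype.card Fq ^ k - 1)) = 0) ∧
    (m ≤ k →
      ‖∑ᶠ x ∈ ((Submodule.span Fq (Set.range fun i : Fin m => v i) : Set L)),
          x ^ (Fintype.card Fq ^ k - 1)‖ ≤
        ‖v (m - 1)‖ ^ ((Fintype.card Fq : ℤ) ^ k - (Fintype.card Fq : ℤ) ^ m) *
          ∏ i ∈ Finset.range m,
            ‖v i‖ ^ ((Fintype.card Fq : ℤ) ^ (i + 1) - (Fintype.card Fq : ℤ) ^ i)) := by
  have hli := hv.linearIndependent
  have hpos : ∀ i, 0 < ‖v i‖ := fun i =>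
    norm_pos_iff.mpr fun h => (hv i).2.1 (h ▸ Submodule.zero_mem _)
  have hle : ∀ c : Fq, ‖algebraMap Fq L c‖ ≤ 1 := fun c => by
    by_cases hc : c = 0
    · simp [hc]
    · exact (htriv c hc).le
  have hsum : (∑ᶠ x ∈ ((Submodule.span Fq (Set.range fun i : Fin m => v i) : Set L)),
      x ^ (Fintype.card Fq ^ k - 1)) = powSum Fq v m (Fintype.card Fq ^ k - 1) := by
    rw [← Fintype.range_linearCombination, LinearMap.coe_range,
      finsum_mem_range (hli m).fintypeLinearCombination_injective, finsum_eq_sum_of_fintype, powSum]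
  have hq : 1 < Fintype.card Fq := Fintype.one_lt_card
  have hk1 : Fintype.card Fq ^ k - 1 + 1 = Fintype.card Fq ^ k :=
    Nat.sub_add_cancel (Nat.one_le_pow _ _ (by omega))
  rw [hsum]
  refine ⟨fun hkm => powSum_eq_zero v m _ (hli m) ?_, fun _ => ?_⟩
  · rw [hk1]
    exact Nat.pow_lt_pow_right hq hkm
  · have h := norm_powSum_le hle v hli hpos hv.monotone_norm m (Fintype.card Fq ^ k - 1)
      ‖v (m - 1)‖ (hpos _) fun i hi => hv.monotone_norm (by omega)
    have hcast : ((Fintype.card Fq ^ k - 1 : ℕ) : ℤ) + 1 = (Fintype.card Fq : ℤ) ^ k := by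
      exact_mod_cast hk1
    rwa [hcast] at h
end

section
/- Let Λ ⊆ L be an infinite-dimensional locally finite subspace and let exp_Λ(x) := x·∏_{λ∈Λ∖{0}}(1 − x/λ). Then for every c ∈ L with ‖c‖ < 1 and every ordered basis (λ_i)_{i≥1} of Λ, setting Λ_m := span_{F_q}{λ_1,…,λ_m}, the limit lim_{m→∞} ∑_{λ∈Λ_m∖{0}} exp_Λ(cλ)/λ exists in L and equals −c. (In the paper, Λ is the period lattice of a Drinfeld module over C_∞ and c ranges over elements of K_∞ of absolute value less than 1, yielding the identity c = −∑_{λ∈Λ∖{0}} exp_Λ(cλ)/λ.) -/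
/-!
Let `V` be a finite additive subgroup of `L`, `n = #V`, `D = ∏_{u ∈ V ∖ 0} u`, and let `ρ` bound
the norms of the elements of `V`. By Lagrange interpolation at the nodes `V` (where
`∏_{w ≠ v} (v - w) = D` for every `v ∈ V`), the power sums `s_k = ∑_{v ∈ V} v ^ k` vanish for
`k < n - 1`, and `s_{n-1} = D`. The recurrence defined by `∏_{v ∈ V} (X - v)` then gives
`‖s_k‖ ρ ^ (n - 1) ≤ ‖D‖ ρ ^ k` for all `k` (`norm_powerSum_le`).

Let `S` be a finite set of nonzero elements containing `V ∖ 0`, all of whose other elements have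
norm at least `ρ`, and `H = ∏_{l ∈ S} (1 - X / l) = ∑ h_k X ^ k`. Multiplicativity of Gauss norms
gives `‖h_k‖ ρ ^ k ≤ ρ ^ (n - 1) / ‖D‖`, so `‖h_k s_k‖ ≤ 1`. As `H(0) = 1`,
`∑_{v ∈ V ∖ 0} c v H(c v) / v + c = c ∑_{v ∈ V} H(c v) = ∑_{k ≥ n - 1} c ^ (k + 1) h_k s_k`,
which has norm at most `‖c‖ ^ n` (`norm_sum_add_le`). This is uniform in `S`, so it passes to the
limit and holds for `exp_Λ` itself (the product converges by `multipliable_one_sub`). Taking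
`V = Λ_m` and `ρ = ‖lam m‖`, where `n ≥ m`, the right side tends to `0`.
-/

open Filter Topology

/-! ### Gauss norms -/

open Polynomial in
/-- `GaussLE ρ f A` says that the Gauss norm of `f` at radius `ρ` is at most `A`,
where the Gauss norm is the maximum of `‖f.coeff i‖ * ρ ^ i`. -/
def GaussLE {L : Type*} [NormedField L] (ρ : ℝ) (f : L[X]) (A : ℝ) : Prop :=
  ∀ i, ‖f.coeff i‖ * ρ ^ i ≤ A

section Core

variable {L : Type*} [NormedField L]

open Polynomial

theorem GaussLE.one {ρ : ℝ} : GaussLE ρ (1 : L[X]) 1 := by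
  intro i
  rcases i with _ | i
  · simp
  · simp [coeff_one]

theorem GaussLE.mul [IsUltrametricDist L] {ρ : ℝ} (hρ : 0 < ρ) {f g : L[X]} {A B : ℝ}
    (hf : GaussLE ρ f A) (hg : GaussLE ρ g B) : GaussLE ρ (f * g) (A * B) := by
  have hA : 0 ≤ A := le_trans (by positivity) (hf 0)
  have hB : 0 ≤ B := le_trans (by positivity) (hg 0)
  intro i
  rw [coeff_mul, ← le_div_iff₀ (by positivity)]
  refine IsUltrametricDist.norm_sum_le_of_forall_le_of_nonneg (by positivity) fun p hp => ?_
  rw [le_div_iff₀ (by positivity), norm_mul, ← Finset.HasAntidiagonal.mem_antidiagonal.mp hp, pow_add]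
  calc ‖f.coeff p.1‖ * ‖g.coeff p.2‖ * (ρ ^ p.1 * ρ ^ p.2)
      = (‖f.coeff p.1‖ * ρ ^ p.1) * (‖g.coeff p.2‖ * ρ ^ p.2) := by ring
    _ ≤ A * B := mul_le_mul (hf _) (hg _) (by positivity) hA

theorem GaussLE.prod [IsUltrametricDist L] {ι : Type*} {ρ : ℝ} (hρ : 0 < ρ) (s : Finset ι) {f : ι → L[X]} {A : ι → ℝ}
    (h : ∀ i ∈ s, GaussLE ρ (f i) (A i)) : GaussLE ρ (∏ i ∈ s, f i) (∏ i ∈ s, A i) := by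
  classical
  induction s using Finset.induction_on with
  | empty => simpa using GaussLE.one
  | insert a s ha ih =>
    rw [Finset.prod_insert ha, Finset.prod_insert ha]
    exact (h a (by simp)).mul hρ (ih fun i hi => h i (by simp [hi]))

theorem gaussLE_X_sub_C {ρ : ℝ} {v : L} (hv : ‖v‖ ≤ ρ) : GaussLE ρ (X - C v) ρ := by
  have hρ : 0 ≤ ρ := (norm_nonneg v).trans hv
  intro i
  rcases i with _ | _ | i
  · simpa using hv
  · simp
  · simp [coeff_X, hρ]

theorem gaussLE_one_sub {ρ A : ℝ} {l : L} (h1 : 1 ≤ A) (hA : ρ / ‖l‖ ≤ A) :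
    GaussLE ρ (1 - C l⁻¹ * X) A := by
  intro i
  rcases i with _ | _ | i
  · simpa using h1
  · simpa [coeff_one, div_eq_inv_mul] using hA
  · simpa [coeff_one, coeff_X] using h1.trans' zero_le_one

/-! ### Power sums over a finite additive group -/

/-- Translation invariance of the finite group `V`: the derivative of `∏_{v ∈ V} (X - v)`
takes the same value at every point of `V`. -/
theorem prod_erase_sub [DecidableEq L] {V : Finset L} (hsub : ∀ x ∈ V, ∀ y ∈ V, x - y ∈ V)
    {v : L} (hv : v ∈ V) : ∏ w ∈ V.erase v, (v - w) = ∏ u ∈ V.erase 0, u := by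
  refine Finset.prod_nbij' (fun w => v - w) (fun u => v - u) ?_ ?_ ?_ ?_ ?_
  · intro w hw
    rw [Finset.mem_erase] at hw ⊢
    exact ⟨sub_ne_zero.mpr hw.1.symm, hsub _ hv _ hw.2⟩
  · intro u hu
    rw [Finset.mem_erase] at hu ⊢
    exact ⟨by simpa using hu.1, hsub _ hv _ hu.2⟩
  · intros; ring
  · intros; ring
  · intros; rfl

/-- Up to the common factor `∏ u`, the power sum is the top coefficient of the Lagrange
interpolation of `X ^ k` at the nodes `V`. -/
theorem powerSum_low [DecidableEq L] {V : Finset L} (hsub : ∀ x ∈ V, ∀ y ∈ V, x - y ∈ V)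
    {k : ℕ} (hk : k < V.card) :
    ∑ v ∈ V, v ^ k = if k = V.card - 1 then ∏ u ∈ V.erase 0, u else 0 := by
  have hD : ∏ u ∈ V.erase 0, u ≠ 0 :=
    Finset.prod_ne_zero_iff.mpr fun u hu => (Finset.mem_erase.mp hu).1
  have h := Lagrange.coeff_eq_sum (s := V) (v := (id : L → L)) Function.injective_id.injOn
    (P := X ^ k) (by rw [degree_X_pow]; exact_mod_cast hk)
  have h2 : ∑ i ∈ V, eval (id i) (X ^ k : L[X]) / ∏ j ∈ V.erase i, (id i - id j)
      = (∑ v ∈ V, v ^ k) / ∏ u ∈ V.erase 0, u := by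
    rw [Finset.sum_div]
    refine Finset.sum_congr rfl fun i hi => ?_
    simp [prod_erase_sub hsub hi]
  rw [h2, coeff_X_pow, eq_div_iff hD] at h
  simp only [← h, eq_comm (a := V.card - 1), ite_mul, one_mul, zero_mul]

/-- For `k < #V - 1` the left side is `0`, and for `k = #V - 1` both sides agree. Power sums
of order at least `#V` obey the linear recurrence given by the monic polynomial
`∏_{v ∈ V} (X - v)`, whose Gauss norm at radius `ρ` is at most `ρ ^ #V`. -/
theorem norm_powerSum_le [IsUltrametricDist L] [DecidableEq L] {V : Finset L}
    (hsub : ∀ x ∈ V, ∀ y ∈ V, x - y ∈ V)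
    {ρ : ℝ} (hρ : 0 < ρ) (hV : ∀ v ∈ V, ‖v‖ ≤ ρ) (k : ℕ) :
    ‖∑ v ∈ V, v ^ k‖ * ρ ^ (V.card - 1) ≤ ‖∏ u ∈ V.erase 0, u‖ * ρ ^ k := by
  induction k using Nat.strong_induction_on with
  | _ k ih =>
  rcases lt_or_ge k V.card with hk | hk
  · rw [powerSum_low hsub hk]
    split_ifs with h
    · rw [h]
    · simp; positivity
  · obtain ⟨d, rfl⟩ := Nat.exists_eq_add_of_le hk
    set P : L[X] := Lagrange.nodal V id with hP
    have hPdeg : P.natDegree = V.card := Lagrange.natDegree_nodal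
    have hPmon : P.coeff V.card = 1 := by
      rw [← hPdeg]; exact Lagrange.nodal_monic
    have hPG : GaussLE ρ P (ρ ^ V.card) := by
      have := GaussLE.prod hρ V (f := fun v => X - C v) (A := fun _ => ρ)
        fun v hv => gaussLE_X_sub_C (hV v hv)
      simpa [hP, Lagrange.nodal_eq] using this
    have hrec : ∑ v ∈ V, v ^ (V.card + d)
        = -∑ i ∈ Finset.range V.card, P.coeff i * ∑ v ∈ V, v ^ (i + d) := by
      have h : ∀ v ∈ V, v ^ (V.card + d)
          = -∑ i ∈ Finset.range V.card, P.coeff i * v ^ (i + d) := by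
        intro v hv
        have h1 : eval v P = 0 := Lagrange.eval_nodal_at_node (v := (id : L → L)) hv
        rw [eval_eq_sum_range, hPdeg, Finset.sum_range_succ, hPmon, one_mul] at h1
        rw [pow_add, eq_neg_of_add_eq_zero_right h1, neg_mul, Finset.sum_mul]
        simp only [pow_add, mul_assoc]
      rw [Finset.sum_congr rfl h, Finset.sum_neg_distrib, Finset.sum_comm]
      simp only [Finset.mul_sum]
    rw [hrec, norm_neg, ← le_div_iff₀ (by positivity)]
    refine IsUltrametricDist.norm_sum_le_of_forall_le_of_nonneg (by positivity) fun i hi => ?_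
    rw [Finset.mem_range] at hi
    rw [le_div_iff₀ (by positivity), norm_mul]
    have h1 := hPG i
    have h2 := ih (i + d) (by omega)
    have h3 := mul_le_mul h1 h2 (by positivity) (by positivity)
    refine le_of_mul_le_mul_right ?_ (pow_pos hρ i)
    calc _ = ‖P.coeff i‖ * ρ ^ i * (‖∑ v ∈ V, v ^ (i + d)‖ * ρ ^ (V.card - 1)) := by ring
      _ ≤ _ := h3
      _ = _ := by ring

/-! ### The estimate for finite products -/

/-- The estimate for a finite product in place of `exp_Λ`, uniform in the set `S` of zeros. -/
theorem norm_sum_add_le [IsUltrametricDist L] [DecidableEq L] {V S : Finset L} (h0 : 0 ∈ V) (hsub : ∀ x ∈ V, ∀ y ∈ V, x - y ∈ V)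
    {ρ : ℝ} (hρ : 0 < ρ) (hV : ∀ v ∈ V, ‖v‖ ≤ ρ) (hVS : V.erase 0 ⊆ S) (hS0 : 0 ∉ S)
    (hS : ∀ l ∈ S, l ∉ V → ρ ≤ ‖l‖) {c : L} (hc : ‖c‖ ≤ 1) :
    ‖∑ v ∈ V.erase 0, (c * v * ∏ l ∈ S, (1 - c * v / l)) / v + c‖ ≤ ‖c‖ ^ V.card := by
  have hD : ∏ u ∈ V.erase 0, u ≠ 0 :=
    Finset.prod_ne_zero_iff.mpr fun u hu => (Finset.mem_erase.mp hu).1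
  have hn : 1 ≤ V.card := Finset.card_pos.mpr ⟨0, h0⟩
  set H : L[X] := ∏ l ∈ S, (1 - C l⁻¹ * X) with hH
  have hHG : GaussLE ρ H (ρ ^ (V.card - 1) / ‖∏ u ∈ V.erase 0, u‖) := by
    have := GaussLE.prod hρ S (f := fun l => 1 - C l⁻¹ * X)
      (A := fun l => if l ∈ V.erase 0 then ρ / ‖l‖ else 1) fun l hl => by
        have hl0 : l ≠ 0 := fun h => hS0 (h ▸ hl)
        have hlpos : 0 < ‖l‖ := norm_pos_iff.mpr hl0
        split_ifs with h
        · exact gaussLE_one_sub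
            ((one_le_div hlpos).mpr (hV l (Finset.mem_erase.mp h).2)) le_rfl
        · refine gaussLE_one_sub le_rfl ((div_le_one hlpos).mpr (hS l hl fun h' => ?_))
          exact h (Finset.mem_erase.mpr ⟨hl0, h'⟩)
    rwa [Finset.prod_ite_mem, Finset.inter_eq_right.mpr hVS, Finset.prod_div_distrib,
      Finset.prod_const, Finset.card_erase_of_mem h0, ← norm_prod] at this
  have heval : ∀ x : L, ∏ l ∈ S, (1 - x / l) = eval x H := by
    intro x
    rw [hH, eval_prod]
    refine Finset.prod_congr rfl fun l _ => ?_
    simp [div_eq_inv_mul]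
  have hH0 : eval 0 H = 1 := by rw [← heval]; simp
  have key : ∑ v ∈ V.erase 0, (c * v * ∏ l ∈ S, (1 - c * v / l)) / v + c
      = ∑ k ∈ Finset.range (H.natDegree + 1), c ^ (k + 1) * (H.coeff k * ∑ v ∈ V, v ^ k) := by
    have h1 : ∑ v ∈ V.erase 0, (c * v * ∏ l ∈ S, (1 - c * v / l)) / v
        = ∑ v ∈ V.erase 0, c * eval (c * v) H := by
      refine Finset.sum_congr rfl fun v hv => ?_
      have := (Finset.mem_erase.mp hv).1
      rw [heval]
      field_simp
    have h2 : c = c * eval (c * 0) H := by rw [mul_zero, hH0, mul_one]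
    rw [h1]
    -- The term `c` is the missing summand `v = 0`.
    nth_rewrite 3 [h2]
    rw [Finset.sum_erase_add V _ h0]
    simp only [eval_eq_sum_range, Finset.mul_sum]
    rw [Finset.sum_comm]
    refine Finset.sum_congr rfl fun k _ => Finset.sum_congr rfl fun v _ => ?_
    ring
  rw [key]
  refine IsUltrametricDist.norm_sum_le_of_forall_le_of_nonneg (by positivity) fun k _ => ?_
  rcases lt_or_ge k (V.card - 1) with hk | hk
  · rw [powerSum_low hsub (by omega), if_neg (by omega)]
    simp
  · have hterm : ‖H.coeff k‖ * ‖∑ v ∈ V, v ^ k‖ ≤ 1 := by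
      have hDp := norm_pos_iff.mpr hD
      have h3 := mul_le_mul (hHG k) (norm_powerSum_le hsub hρ hV k) (by positivity)
        (by positivity)
      refine le_of_mul_le_mul_right ?_ (mul_pos (pow_pos hρ k) (pow_pos hρ (V.card - 1)))
      calc _ = ‖H.coeff k‖ * ρ ^ k * (‖∑ v ∈ V, v ^ k‖ * ρ ^ (V.card - 1)) := by ring
        _ ≤ _ := h3
        _ = _ := by field_simp
    rw [norm_mul, norm_mul, norm_pow]
    calc _ ≤ ‖c‖ ^ (k + 1) * 1 := by gcongr
      _ ≤ _ := by
        rw [mul_one]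
        exact pow_le_pow_of_le_one (norm_nonneg _) hc (by omega)

/-! ### Convergence of the product -/

theorem norm_sub_le_max' [IsUltrametricDist L] (x y : L) : ‖x - y‖ ≤ max ‖x‖ ‖y‖ := by
  simpa [sub_eq_add_neg] using IsUltrametricDist.norm_add_le_max x (-y)

theorem norm_prod_one_sub_sub_one_le [IsUltrametricDist L] {ι : Type*} (s : Finset ι) {a : ι → L} {δ : ℝ}
    (hδ0 : 0 ≤ δ) (hδ : δ ≤ 1) (h : ∀ i ∈ s, ‖a i‖ ≤ δ) : ‖∏ i ∈ s, (1 - a i) - 1‖ ≤ δ := by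
  classical
  induction s using Finset.induction_on with
  | empty => simpa using hδ0
  | insert i s hi ih =>
    have ih := ih fun j hj => h j (by simp [hj])
    have hP : ‖∏ i ∈ s, (1 - a i)‖ ≤ 1 := by
      rw [← sub_add_cancel (∏ i ∈ s, (1 - a i)) 1]
      exact (IsUltrametricDist.norm_add_le_max _ _).trans (max_le (ih.trans hδ) (by simp))
    have hi' := h i (by simp)
    rw [Finset.prod_insert hi]
    have : (1 - a i) * ∏ j ∈ s, (1 - a j) - 1
        = (∏ j ∈ s, (1 - a j) - 1) - a i * ∏ j ∈ s, (1 - a j) := by ring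
    rw [this]
    refine (norm_sub_le_max' _ _).trans (max_le ih ?_)
    rw [norm_mul]
    exact (mul_le_of_le_one_right (norm_nonneg _) hP).trans hi'

/-- Zero factors are allowed, so the criterion for products in topological groups does not
apply; the Cauchy criterion is checked directly. -/
theorem multipliable_one_sub [IsUltrametricDist L] [CompleteSpace L] {ι : Type*} {a : ι → L}
    (h : ∀ δ : ℝ, 0 < δ → {i | δ ≤ ‖a i‖}.Finite) : Multipliable fun i => 1 - a i := by
  classical
  rw [multipliable_iff_cauchySeq_finset, Metric.cauchySeq_iff']
  intro ε hε
  set T := (h 1 one_pos).toFinset with hT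
  set B := ‖∏ i ∈ T, (1 - a i)‖ with hB
  have hB0 : 0 ≤ B := norm_nonneg _
  -- The factors outside `T` have norm at most `1`, so every product over `s ⊇ T` is bounded by `B`.
  have hbd : ∀ s, T ⊆ s → ‖∏ i ∈ s, (1 - a i)‖ ≤ B := by
    intro s hs
    rw [← Finset.prod_sdiff hs, norm_mul]
    refine mul_le_of_le_one_left hB0 ?_
    rw [norm_prod]
    refine Finset.prod_le_one (fun _ _ => norm_nonneg _) fun i hi => ?_
    have : ‖a i‖ ≤ 1 := by
      by_contra! hcon
      exact (Finset.mem_sdiff.mp hi).2 (by simpa [hT] using hcon.le)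
    exact (norm_sub_le_max' _ _).trans (max_le (by simp) this)
  set δ := min 1 (ε / (B + 1)) with hδ
  have hδ0 : 0 < δ := lt_min one_pos (by positivity)
  refine ⟨T ∪ (h δ hδ0).toFinset, fun s hs => ?_⟩
  set s₀ := T ∪ (h δ hδ0).toFinset with hs₀
  have hs' : s₀ ⊆ s := hs
  have h1 : ‖∏ i ∈ s \ s₀, (1 - a i) - 1‖ ≤ δ := by
    refine norm_prod_one_sub_sub_one_le _ hδ0.le (min_le_left _ _) fun i hi => ?_
    by_contra! hcon
    refine (Finset.mem_sdiff.mp hi).2 (Finset.mem_union_right _ ?_)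
    simpa using hcon.le
  have h2 := hbd s₀ Finset.subset_union_left
  rw [dist_eq_norm, ← Finset.prod_sdiff hs', ← sub_one_mul, norm_mul]
  calc _ ≤ δ * B := mul_le_mul h1 h2 (norm_nonneg _) hδ0.le
    _ < δ * (B + 1) := by gcongr; linarith
    _ ≤ ε / (B + 1) * (B + 1) := by gcongr; exact min_le_right _ _
    _ = ε := by field_simp

end Core

/-! ### The limit -/

/-- Let `Λ ⊆ L` be an infinite-dimensional locally finite subspace and
`exp_Λ(x) := x·∏_{λ ∈ Λ∖{0}} (1 − x/λ)`.  For every `c ∈ L` with `‖c‖ < 1` and every ordered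
basis `(λ_i)` of `Λ`, with `Λ_m := span{λ_1, …, λ_m}`,
`lim_{m → ∞} ∑_{λ ∈ Λ_m ∖ {0}} exp_Λ(cλ)/λ = −c`. -/
theorem stmt9 {Fq L : Type*} [Field Fq] [Fintype Fq] [NormedField L] [IsUltrametricDist L]
    [CompleteSpace L] [Algebra Fq L]
    (htriv : ∀ c : Fq, c ≠ 0 → ‖algebraMap Fq L c‖ = 1)
    (Λ : Submodule Fq L) (hΛ : IsLocallyFiniteSubspace Fq Λ)
    (hinf : ¬ Module.Finite Fq Λ)
    (expΛ : L → L)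
    (hexp : ∀ x, expΛ x = x * ∏' l : ↥((Λ : Set L) \ {0}), (1 - x / (l : L)))
    (c : L) (hc : ‖c‖ < 1)
    (lam : ℕ → L) (hlam : IsOrderedBasis Fq Λ lam) :
    Tendsto
      (fun m : ℕ =>
        ∑ᶠ x ∈ ((Submodule.span Fq (Set.range fun i : Fin m => lam i) : Set L) \ {0}),
          expΛ (c * x) / x)
      atTop (𝓝 (-c)) := by
  classical
  have hspan_le : ∀ m, Submodule.span Fq (Set.range fun i : Fin m => lam i) ≤ Λ := by
    intro m
    rw [Submodule.span_le]
    rintro _ ⟨i, rfl⟩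
    exact (hlam i).1
  have hmem : ∀ {i m : ℕ}, i < m →
      lam i ∈ Submodule.span Fq (Set.range fun i : Fin m => lam i) := fun {i m} hi =>
    Submodule.subset_span ⟨⟨i, hi⟩, rfl⟩
  have hspan_mono : ∀ {i m : ℕ}, i ≤ m →
      Submodule.span Fq (Set.range fun j : Fin i => lam j) ≤
        Submodule.span Fq (Set.range fun j : Fin m => lam j) := by
    intro i m him
    rw [Submodule.span_le]
    rintro _ ⟨j, rfl⟩
    exact hmem (j.2.trans_le him)
  have hlam0 : ∀ m, 0 < ‖lam m‖ := fun m => norm_pos_iff.mpr fun h =>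
    (hlam m).2.1 (h ▸ Submodule.zero_mem _)
  have hlam_mono : ∀ {i m : ℕ}, i ≤ m → ‖lam i‖ ≤ ‖lam m‖ := fun {i m} him =>
    (hlam i).2.2 _ (hlam m).1 fun h => (hlam m).2.1 (hspan_mono him h)
  have hlam_inj : Function.Injective lam := by
    intro i j hij
    rcases lt_trichotomy i j with h | h | h
    · exact ((hlam j).2.1 (hij ▸ hmem h)).elim
    · exact h
    · exact ((hlam i).2.1 (hij ▸ hmem h)).elim
  have hnorm : ∀ m, ∀ x ∈ Submodule.span Fq (Set.range fun i : Fin m => lam i),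
      ‖x‖ ≤ ‖lam m‖ := by
    intro m x hx
    induction hx using Submodule.span_induction with
    | mem x hx => obtain ⟨i, rfl⟩ := hx; exact hlam_mono i.2.le
    | zero => simp
    | add x y _ _ hx hy => exact (IsUltrametricDist.norm_add_le_max _ _).trans (max_le hx hy)
    | smul a x _ hx =>
      rw [Algebra.smul_def, norm_mul]
      rcases eq_or_ne a 0 with rfl | ha
      · simp
      · rwa [htriv a ha, one_mul]
  have hfin : ∀ m, (Submodule.span Fq (Set.range fun i : Fin m => lam i) : Set L).Finite :=
    fun m => (hΛ _ (hlam0 m)).subset fun x hx => ⟨hspan_le m hx, hnorm m x hx⟩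
  have hexp_lim : ∀ x, Tendsto
      (fun s : Finset ↥((Λ : Set L) \ {0}) => x * ∏ l ∈ s, (1 - x / (l : L))) atTop
      (𝓝 (expΛ x)) := by
    intro x
    rw [hexp]
    refine Tendsto.const_mul x (multipliable_one_sub fun δ hδ => ?_).hasProd
    refine Set.Finite.of_finite_image (f := Subtype.val) ?_ Subtype.val_injective.injOn
    refine (hΛ (‖x‖ / δ + 1) (by positivity)).subset ?_
    rintro _ ⟨l, hl, rfl⟩
    refine ⟨l.2.1, ?_⟩
    have hl0 : 0 < ‖(l : L)‖ := norm_pos_iff.mpr l.2.2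
    rw [Set.mem_ofPred_eq, norm_div, le_div_iff₀ hl0] at hl
    have : ‖(l : L)‖ ≤ ‖x‖ / δ := by rw [le_div_iff₀ hδ]; linarith
    linarith
  have hbound : ∀ m : ℕ, ‖(∑ᶠ x ∈ ((Submodule.span Fq
      (Set.range fun i : Fin m => lam i) : Set L) \ {0}), expΛ (c * x) / x) - -c‖ ≤ ‖c‖ ^ m := by
    intro m
    set V : Finset L := (hfin m).toFinset with hVdef
    have hVmem : ∀ x, x ∈ V ↔ x ∈ Submodule.span Fq (Set.range fun i : Fin m => lam i) := by
      intro x; simp [hVdef]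
    have hset : ((Submodule.span Fq (Set.range fun i : Fin m => lam i) : Set L) \ {0})
        = ↑(V.erase 0) := by
      rw [Finset.coe_erase, Set.Finite.coe_toFinset]
    have hcard : m ≤ V.card := by
      have := Finset.card_le_card (s := (Finset.range m).image lam) (t := V) fun x hx => by
        obtain ⟨i, hi, rfl⟩ := Finset.mem_image.mp hx
        exact (hVmem _).mpr (hmem (Finset.mem_range.mp hi))
      rwa [Finset.card_image_of_injective _ hlam_inj, Finset.card_range] at this
    rw [hset, finsum_mem_coe_finset, sub_neg_eq_add]
    refine le_trans ?_ (pow_le_pow_of_le_one (norm_nonneg c) hc.le hcard)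
    -- Both sides of the bound survive the limit over finite sets of zeros of `exp_Λ`.
    have hlim := ((tendsto_finsetSum (V.erase 0) fun v _ =>
      (hexp_lim (c * v)).div_const v).add_const c).norm
    refine le_of_tendsto hlim ?_
    have hV0 : ∀ x ∈ V.erase 0, x ∈ (Λ : Set L) \ {0} := fun x hx =>
      ⟨hspan_le m ((hVmem x).mp (Finset.mem_erase.mp hx).2), (Finset.mem_erase.mp hx).1⟩
    filter_upwards [eventually_ge_atTop ((V.erase 0).subtype (· ∈ (Λ : Set L) \ {0}))] with s hs
    have := norm_sum_add_le (V := V) (S := s.map (Function.Embedding.subtype _)) (ρ := ‖lam m‖)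
      (c := c) ((hVmem 0).mpr (Submodule.zero_mem _))
      (fun x hx y hy => (hVmem _).mpr (Submodule.sub_mem _ ((hVmem x).mp hx) ((hVmem y).mp hy)))
      (hlam0 m) (fun v hv => hnorm m v ((hVmem v).mp hv))
      (fun x hx => Finset.mem_map.mpr
        ⟨⟨x, hV0 x hx⟩, hs (Finset.mem_subtype.mpr hx), rfl⟩)
      (fun h => by
        obtain ⟨l, -, hl⟩ := Finset.mem_map.mp h
        exact l.2.2 hl)
      (fun l hl hlV => by
        obtain ⟨l, -, rfl⟩ := Finset.mem_map.mp hl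
        exact (hlam m).2.2 _ l.2.1 fun h => hlV ((hVmem _).mpr h))
      hc.le
    simpa only [Finset.prod_map, Function.Embedding.subtype_apply] using this
  rw [tendsto_iff_norm_sub_tendsto_zero]
  exact squeeze_zero (fun _ => norm_nonneg _) hbound
    (tendsto_pow_atTop_nhds_zero_of_lt_one (norm_nonneg c) hc)
end
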